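/- (Sufficiency, time-varying networks.) Consider a time-varying network modeled by D(t) = (V, E(t)) under the f-fraction local Byzantine model, whose topology is governed by a piecewise constant switching signal with switching times {t_k} satisfying the dwell-time condition t_{k+1} − t_k ≥ τ for all k, for some τ > 0. Suppose each normal node updates its value according to ARC-P with parameter f ∈ [0,1/2). If there exists t' ≥ 0 such that D(t) is p-fraction robust for all t ≥ t', for some p with 2f < p ≤ 1, then the normal agents achieve continuous-time resilient asymptotic consensus (CTRAC): all normal states converge to a common limit and remain in [m_N(0), M_N(0)] for all t ≥ 0, for every choice of initial values and every admissible adversary behavior. -/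

import Mathlib

open Finset Filter Topology MeasureTheory

namespace ARCP

variable {n : ℕ}

/-- `R` is a valid ARC-P removal of the (up to) `F` largest neighboring values. -/
def RemovalHigh (Nin : Finset (Fin n)) (v : Fin n → ℝ) (xi : ℝ) (F : ℕ)
    (R : Finset (Fin n)) : Prop :=
  R ⊆ Nin ∧
    (((Nin.filter fun j => xi < v j).card < F ∧ R = Nin.filter fun j => xi < v j) ∨
      (F ≤ (Nin.filter fun j => xi < v j).card ∧ R.card = F ∧
        ∀ j ∈ R, ∀ k ∈ Nin \ R, v k ≤ v j))

/-- `R` is a valid ARC-P removal of the (up to) `F` smallest neighboring values. -/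
def RemovalLow (Nin : Finset (Fin n)) (v : Fin n → ℝ) (xi : ℝ) (F : ℕ)
    (R : Finset (Fin n)) : Prop :=
  R ⊆ Nin ∧
    (((Nin.filter fun j => v j < xi).card < F ∧ R = Nin.filter fun j => v j < xi) ∨
      (F ≤ (Nin.filter fun j => v j < xi).card ∧ R.card = F ∧
        ∀ j ∈ R, ∀ k ∈ Nin \ R, v j ≤ v k))

/-- `R` is a valid set of in-neighbors removed by the ARC-P rule with threshold `F`. -/
def IsARCPRemoval (Nin : Finset (Fin n)) (v : Fin n → ℝ) (xi : ℝ) (F : ℕ)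
    (R : Finset (Fin n)) : Prop :=
  ∃ Rhi Rlo : Finset (Fin n),
    R = Rhi ∪ Rlo ∧ RemovalHigh Nin v xi F Rhi ∧ RemovalLow Nin v xi F Rlo

/-- The ARC-P control input: `∑_{j ∈ Nin \ R} w j * (v j - xi)`. -/
def arcpUpdate (Nin R : Finset (Fin n)) (w : Fin n → ℝ) (v : Fin n → ℝ) (xi : ℝ) : ℝ :=
  ∑ j ∈ Nin \ R, w j * (v j - xi)

/-- `S` is a `p`-fraction edge reachable set of the digraph with in-neighborhoods `Nin`. -/
def FracEdgeReachable (Nin : Fin n → Finset (Fin n)) (p : ℝ) (S : Finset (Fin n)) : Prop :=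
  (∃ i ∈ S, 0 < (Nin i).card ∧ ⌈p * (((Nin i).card : ℝ))⌉₊ ≤ ((Nin i) \ S).card) ∨
    (p = 0 ∧ ∀ i ∈ S, ((Nin i) \ S).card = 0)

/-- The digraph with in-neighborhoods `Nin` is `p`-fraction robust. -/
def FracRobust (Nin : Fin n → Finset (Fin n)) (p : ℝ) : Prop :=
  ∀ S₁ S₂ : Finset (Fin n), S₁.Nonempty → S₂.Nonempty → Disjoint S₁ S₂ →
    FracEdgeReachable Nin p S₁ ∨ FracEdgeReachable Nin p S₂

end ARCP

/-! The negative of an ARC-P solution is again one, so it suffices to estimate upper bounds.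
Let `C' ≤ x ≤ C` bound the normal agents at time `a`. A normal agent removes at least as many large
values as it has adversaries among its in-neighbors, so every value it retains is at most `C`; hence
`ẋᵢ ≤ B (C - xᵢ)`, and by Grönwall the bound `C` persists and a gap `C - xᵢ` shrinks at most
exponentially. If moreover more than `Fᵢ` normal in-neighbors are below `V`, then either `xᵢ ≤ V` or
one of them is retained, so that `ẋᵢ ≤ B (C - xᵢ) + α (V - xᵢ)`, which pulls `xᵢ` below `C`.

Call an agent extreme if it is within `η` of one of the two bounds. As `2 Fᵢ < ⌈p dᵢ⌉`, robustness
gives an agent of one of the two extreme sets more than `Fᵢ` normal in-neighbors outside that set.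
The dwell time keeps these in-neighbors fixed long enough for that agent to leave the extreme set
when `η` is replaced by `q η`. After boundedly many rounds one of the extreme sets is empty, so the
range of the normal states has shrunk by a fixed factor. -/

namespace ARCP

section Convergence

variable {ι : Type*} {N : Set ι}

theorem exists_forall_tendsto_of_dist_lt {T E : Type*} [SemilatticeSup T] [Nonempty T]
    [PseudoMetricSpace E] [CompleteSpace E] (hN : N.Nonempty) {x : ι → T → E}
    (h : ∀ ε > 0, ∃ b, ∀ i ∈ N, ∀ j ∈ N, ∀ s ≥ b, ∀ t ≥ b, dist (x i s) (x j t) < ε) :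
    ∃ L, ∀ i ∈ N, Tendsto (x i) atTop (𝓝 L) := by
  obtain ⟨i₀, hi₀⟩ := hN
  have hcauchy : CauchySeq (x i₀) := Metric.cauchySeq_iff.2 fun ε hε => by
    obtain ⟨b, hb⟩ := h ε hε
    exact ⟨b, fun s hs t ht => hb i₀ hi₀ i₀ hi₀ s hs t ht⟩
  obtain ⟨L, hL⟩ := cauchySeq_tendsto_of_complete hcauchy
  refine ⟨L, fun i hi => hL.congr_dist (Metric.tendsto_atTop.2 fun ε hε => ?_)⟩
  obtain ⟨b, hb⟩ := h ε hε
  refine ⟨b, fun t ht => ?_⟩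
  simpa using hb i₀ hi₀ i hi t ht t ht

theorem exists_forall_tendsto_of_interval_contraction (hN : N.Nonempty) {x : ι → ℝ → ℝ}
    {t₀ ρ : ℝ} (hρ₀ : 0 ≤ ρ) (hρ₁ : ρ < 1)
    (hbdd : ∃ C' C, ∀ i ∈ N, x i t₀ ∈ Set.Icc C' C)
    (hinv : ∀ a C' C, t₀ ≤ a → (∀ i ∈ N, x i a ∈ Set.Icc C' C) →
      ∀ t, a ≤ t → ∀ i ∈ N, x i t ∈ Set.Icc C' C)
    (hcontr : ∀ a C' C, t₀ ≤ a → (∀ i ∈ N, x i a ∈ Set.Icc C' C) →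
      ∃ b D' D, a ≤ b ∧ (∀ i ∈ N, x i b ∈ Set.Icc D' D) ∧ D - D' ≤ ρ * (C - C')) :
    ∃ L, ∀ i ∈ N, Tendsto (x i) atTop (𝓝 L) := by
  obtain ⟨C₀', C₀, h₀⟩ := hbdd
  have hiter : ∀ m : ℕ, ∃ a C' C, t₀ ≤ a ∧ (∀ i ∈ N, x i a ∈ Set.Icc C' C) ∧
      C - C' ≤ ρ ^ m * (C₀ - C₀') := by
    intro m
    induction m with
    | zero => exact ⟨t₀, C₀', C₀, le_rfl, h₀, by simp⟩
    | succ m ih =>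
      obtain ⟨a, C', C, ha, hx, hwidth⟩ := ih
      obtain ⟨b, D', D, hab, hb, hDD⟩ := hcontr a C' C ha hx
      refine ⟨b, D', D, ha.trans hab, hb, hDD.trans ?_⟩
      rw [pow_succ', mul_assoc]
      gcongr
  have hlim : Tendsto (fun m : ℕ => ρ ^ m * (C₀ - C₀')) atTop (𝓝 0) := by
    simpa using (tendsto_pow_atTop_nhds_zero_of_lt_one hρ₀ hρ₁).mul_const (C₀ - C₀')
  refine exists_forall_tendsto_of_dist_lt hN fun ε hε => ?_
  obtain ⟨m, hm⟩ := (hlim.eventually_lt_const hε).exists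
  obtain ⟨a, C', C, ha, hx, hwidth⟩ := hiter m
  refine ⟨a, fun i hi j hj s hs t ht => ?_⟩
  calc dist (x i s) (x j t) ≤ C - C' :=
        Real.dist_le_of_mem_Icc (hinv a C' C ha hx s hs i hi) (hinv a C' C ha hx t ht j hj)
    _ < ε := hwidth.trans_lt hm

end Convergence

theorem exists_first_time_le {ι : Type*} {N : Finset ι} {x : ι → ℝ → ℝ} {a b c : ℝ} (hab : a ≤ b)
    (hx : ∀ i ∈ N, ContinuousOn (x i) (Set.Icc a b)) (hb : ∃ i ∈ N, c ≤ x i b) :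
    ∃ T ∈ Set.Icc a b, (∃ i ∈ N, c ≤ x i T) ∧ ∀ s ∈ Set.Ico a T, ∀ i ∈ N, x i s < c := by
  have hcompact : IsCompact (⋃ i ∈ N, Set.Icc a b ∩ x i ⁻¹' Set.Ici c) :=
    N.isCompact_biUnion fun i hi =>
      isCompact_Icc.of_isClosed_subset ((hx i hi).preimage_isClosed_of_isClosed isClosed_Icc
        isClosed_Ici) Set.inter_subset_left
  obtain ⟨j, hj, hjb⟩ := hb
  obtain ⟨T, hT, hleast⟩ := hcompact.exists_isLeast
    ⟨b, Set.mem_biUnion hj ⟨Set.right_mem_Icc.2 hab, hjb⟩⟩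
  obtain ⟨i, hi, hTab, hiT⟩ := Set.mem_iUnion₂.1 hT
  refine ⟨T, hTab, ⟨i, hi, hiT⟩, fun s hs k hk => ?_⟩
  by_contra! hks
  exact hs.2.not_ge
    (hleast (Set.mem_biUnion hk ⟨⟨hs.1, hs.2.le.trans hTab.2⟩, hks⟩))

theorem exists_half_window_const {γ : Type*} {σ : ℝ → γ} {τ : ℝ} (hτ : 0 < τ) {tseq : ℕ → ℝ}
    (hdwell : ∀ k, τ ≤ tseq (k + 1) - tseq k)
    (hswitch : ∀ k, ∀ t ∈ Set.Ico (tseq k) (tseq (k + 1)), σ t = σ (tseq k))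
    {a : ℝ} (ha : tseq 0 ≤ a) :
    ∃ a', a ≤ a' ∧ a' + τ / 2 ≤ a + τ ∧ ∀ s ∈ Set.Ico a' (a' + τ / 2), σ s = σ a' := by
  have hlinear : ∀ k : ℕ, tseq 0 + k * τ ≤ tseq k := by
    intro k
    induction k with
    | zero => simp
    | succ k ih => push_cast; linarith [hdwell k]
  have hunbounded : ¬BddAbove (Set.range tseq) :=
    not_bddAbove_of_tendsto_atTop <| tendsto_atTop_mono hlinear <|
      tendsto_atTop_add_const_left _ _ (tendsto_natCast_atTop_atTop.atTop_mul_const hτ)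
  have hmono : Monotone tseq := monotone_nat_of_le_succ fun k => by linarith [hdwell k]
  obtain ⟨k, hka, hak⟩ : ∃ k, a ∈ Set.Ico (tseq k) (tseq (k + 1)) := by
    have ha' : a ∈ Set.Ici (tseq 0) := ha
    rw [← Nat.bot_eq_zero, ← iUnion_Ico_map_succ_eq_Ici
      (fun k => hmono (Nat.zero_le k)) hunbounded] at ha'
    simpa using ha'
  rcases le_or_gt (a + τ / 2) (tseq (k + 1)) with hlate | hsoon
  · refine ⟨a, le_rfl, by linarith, fun s hs => ?_⟩
    rw [hswitch k s ⟨hka.trans hs.1, hs.2.trans_le hlate⟩, hswitch k a ⟨hka, hak⟩]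
  · exact ⟨tseq (k + 1), hak.le, by linarith, fun s hs =>
      hswitch (k + 1) s ⟨hs.1, by linarith [hs.2, hdwell (k + 1)]⟩⟩

/-- `y` is a Carathéodory solution of `ẏ = g` on `[0, ∞)`, in integrated form. -/
structure IsCaratheodorySolution (y g : ℝ → ℝ) : Prop where
  intervalIntegrable : ∀ t, 0 ≤ t → IntervalIntegrable g volume 0 t
  eq_add_integral : ∀ t, 0 ≤ t → y t = y 0 + ∫ s in (0 : ℝ)..t, g s

namespace IsCaratheodorySolution

variable {y g : ℝ → ℝ} {a b B C V α r : ℝ}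

theorem neg (h : IsCaratheodorySolution y g) : IsCaratheodorySolution (-y) (-g) where
  intervalIntegrable t ht := (h.intervalIntegrable t ht).neg
  eq_add_integral t ht := by
    simp only [Pi.neg_apply, intervalIntegral.integral_neg, h.eq_add_integral t ht, neg_add]

theorem intervalIntegrable_of_nonneg (h : IsCaratheodorySolution y g) (ha : 0 ≤ a) (hb : 0 ≤ b) :
    IntervalIntegrable g volume a b :=
  (h.intervalIntegrable a ha).symm.trans (h.intervalIntegrable b hb)

theorem sub_eq_integral (h : IsCaratheodorySolution y g) (ha : 0 ≤ a) (hb : 0 ≤ b) :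
    y b - y a = ∫ s in a..b, g s := by
  rw [h.eq_add_integral a ha, h.eq_add_integral b hb, add_sub_add_left_eq_sub,
    intervalIntegral.integral_interval_sub_left (h.intervalIntegrable b hb)
      (h.intervalIntegrable a ha)]

theorem continuousOn (h : IsCaratheodorySolution y g) (ha : 0 ≤ a) :
    ContinuousOn y (Set.Icc a b) := by
  rcases lt_or_ge b a with hba | hab
  · simp [Set.Icc_eq_empty hba.not_ge]
  have hprim := intervalIntegral.continuousOn_primitive_interval'
    (h.intervalIntegrable_of_nonneg ha (ha.trans hab)) Set.left_mem_uIcc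
  rw [Set.uIcc_of_le hab] at hprim
  refine (hprim.const_add (y a)).congr fun t ht => ?_
  linarith [h.sub_eq_integral ha (ha.trans ht.1)]

theorem sub_le_mul_of_le (h : IsCaratheodorySolution y g) (ha : 0 ≤ a) (hab : a ≤ b)
    (hg : ∀ s ∈ Set.Icc a b, g s ≤ r) : y b - y a ≤ r * (b - a) := by
  calc y b - y a = ∫ s in a..b, g s := h.sub_eq_integral ha (ha.trans hab)
    _ ≤ ∫ _ in a..b, r := intervalIntegral.integral_mono_on hab
        (h.intervalIntegrable_of_nonneg ha (ha.trans hab)) intervalIntegrable_const hg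
    _ = r * (b - a) := by simp [mul_comm]

theorem frequently_slope_lt (h : IsCaratheodorySolution y g) {φ : ℝ → ℝ} (ha : 0 ≤ a) (hab : a < b)
    (hφ : ContinuousWithinAt φ (Set.Icc a b) a) (hg : ∀ s ∈ Set.Ico a b, g s ≤ φ s)
    (hr : φ a < r) : ∃ᶠ z in 𝓝[>] a, (z - a)⁻¹ * (y z - y a) < r := by
  obtain ⟨r', hφr', hr'⟩ := exists_between hr
  have hφlt : ∀ᶠ s in 𝓝[≥] a, φ s < r' := by
    rw [← nhdsWithin_Icc_eq_nhdsGE hab]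
    exact hφ.eventually_lt_const hφr'
  obtain ⟨c, hac, hc⟩ := mem_nhdsGE_iff_exists_Ico_subset.1 hφlt
  refine Eventually.frequently ?_
  filter_upwards [Ioo_mem_nhdsGT (lt_min hac hab)] with z hz
  have hslope : y z - y a ≤ r' * (z - a) := h.sub_le_mul_of_le ha hz.1.le fun s hs =>
    have hs' : s < min c b := hs.2.trans_lt hz.2
    (hg s ⟨hs.1, hs'.trans_le (min_le_right c b)⟩).trans
      (hc ⟨hs.1, hs'.trans_le (min_le_left c b)⟩).le
  rw [inv_mul_eq_div]
  exact ((div_le_iff₀ (sub_pos.2 hz.1)).2 hslope).trans_lt hr'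

theorem sub_le_mul_exp (h : IsCaratheodorySolution y g) (ha : 0 ≤ a) (hab : a ≤ b)
    (hg : ∀ s ∈ Set.Ico a b, g s ≤ B * (C - y s)) :
    y b - C ≤ (y a - C) * Real.exp (-B * (b - a)) := by
  have hcont : ContinuousOn y (Set.Icc a b) := h.continuousOn ha
  rw [← gronwallBound_ε0]
  refine le_gronwallBound_of_liminf_deriv_right_le (f := fun t => y t - C)
    (f' := fun s => B * (C - y s)) (hcont.sub continuousOn_const) (fun s hs r hr => ?_) le_rfl
    (fun s _ => by linarith) b ⟨hab, le_rfl⟩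
  simpa using h.frequently_slope_lt (ha.trans hs.1) hs.2
    ((hcont s ⟨hs.1, hs.2.le⟩).mono (Set.Icc_subset_Icc_left hs.1) |>.const_sub C |>.const_mul B)
    (fun u hu => hg u ⟨hs.1.trans hu.1, hu.2⟩) hr

theorem le_sub_exp_mul (h : IsCaratheodorySolution y g) {τ η : ℝ} (hB : 0 ≤ B) (ha : 0 ≤ a)
    (hab : a ≤ b) (hbτ : b ≤ a + τ) (hg : ∀ s ∈ Set.Ico a b, g s ≤ B * (C - y s)) (hη : 0 ≤ η)
    (hya : y a ≤ C - η) : y b ≤ C - Real.exp (-(B * τ)) * η := by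
  have hgap : Real.exp (-(B * τ)) * η ≤ Real.exp (-B * (b - a)) * (C - y a) := by
    gcongr
    · nlinarith
    · linarith
  linarith [h.sub_le_mul_exp ha hab hg]

theorem le_sub_mul_of_pull (h : IsCaratheodorySolution y g) (hBα : 0 < B + α) (ha : 0 ≤ a)
    (hab : a ≤ b) (hya : y a ≤ C)
    (hg : ∀ s ∈ Set.Ico a b, g s ≤ B * (C - y s) + α * (V - y s)) :
    y b ≤ C - α / (B + α) * (1 - Real.exp (-(B + α) * (b - a))) * (C - V) := by
  -- the weighted mean of `C` and `V` is the equilibrium of the bounding linear equation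
  set M := C - α / (B + α) * (C - V) with hM
  have hgM : ∀ s ∈ Set.Ico a b, g s ≤ (B + α) * (M - y s) := fun s hs => by
    refine (hg s hs).trans_eq ?_
    rw [hM]
    field_simp
    ring
  have hexp : (y a - M) * Real.exp (-(B + α) * (b - a)) ≤
      (C - M) * Real.exp (-(B + α) * (b - a)) := by gcongr
  linarith [h.sub_le_mul_exp ha hab hgM]

end IsCaratheodorySolution

section Removal

variable {n : ℕ} {Nin R L Normal : Finset (Fin n)} {w v : Fin n → ℝ} {xi C V α β : ℝ} {F : ℕ}

theorem RemovalHigh.lt_of_mem (h : RemovalHigh Nin v xi F R) {j : Fin n} (hj : j ∈ R) :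
    xi < v j := by
  rcases h.2 with ⟨-, rfl⟩ | ⟨hF, hR, hmax⟩
  · exact (mem_filter.1 hj).2
  · by_contra! hle
    have hsub : Nin.filter (fun k => xi < v k) ⊆ R.erase j := fun k hk => by
      obtain ⟨hkN, hk⟩ := mem_filter.1 hk
      refine mem_erase.2 ⟨by rintro rfl; exact hle.not_gt hk, ?_⟩
      by_contra hkR
      linarith [hmax j hj k (mem_sdiff.2 ⟨hkN, hkR⟩)]
    have hlt := (card_le_card hsub).trans_lt (card_erase_lt_of_mem hj)
    omega

theorem RemovalHigh.le_of_notMem (h : RemovalHigh Nin v xi F R) (hxi : xi ≤ C)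
    (hlocal : (Nin.filter fun j => j ∉ Normal).card ≤ F) (hC : ∀ j ∈ Normal, v j ≤ C)
    {j : Fin n} (hj : j ∈ Nin) (hjR : j ∉ R) : v j ≤ C := by
  by_contra! hlt
  rcases h.2 with ⟨-, rfl⟩ | ⟨-, hR, hmax⟩
  · exact hjR (mem_filter.2 ⟨hj, hxi.trans_lt hlt⟩)
  · have hsub : insert j R ⊆ Nin.filter fun k => k ∉ Normal := by
      refine insert_subset (mem_filter.2 ⟨hj, fun hjN => (hC j hjN).not_gt hlt⟩) fun k hk => ?_
      exact mem_filter.2 ⟨h.1 hk, fun hkN =>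
        ((hmax k hk j (mem_sdiff.2 ⟨hj, hjR⟩)).trans (hC k hkN)).not_gt hlt⟩
    have hcard := card_le_card hsub
    rw [card_insert_of_notMem hjR] at hcard
    omega

theorem RemovalLow.card_le (h : RemovalLow Nin v xi F R) : R.card ≤ F := by
  rcases h.2 with ⟨hlt, rfl⟩ | ⟨-, hR, -⟩
  exacts [hlt.le, hR.le]

theorem RemovalLow.neg (h : RemovalLow Nin v xi F R) : RemovalHigh Nin (-v) (-xi) F R := by
  simpa [RemovalHigh, RemovalLow] using h

theorem RemovalHigh.neg (h : RemovalHigh Nin v xi F R) : RemovalLow Nin (-v) (-xi) F R := by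
  simpa [RemovalHigh, RemovalLow] using h

namespace IsARCPRemoval

theorem neg (h : IsARCPRemoval Nin v xi F R) : IsARCPRemoval Nin (-v) (-xi) F R := by
  obtain ⟨Rhi, Rlo, rfl, hhi, hlo⟩ := h
  exact ⟨Rlo, Rhi, Finset.union_comm _ _, hlo.neg, hhi.neg⟩

theorem le_of_mem_sdiff (h : IsARCPRemoval Nin v xi F R) (hxi : xi ≤ C)
    (hlocal : (Nin.filter fun j => j ∉ Normal).card ≤ F) (hC : ∀ j ∈ Normal, v j ≤ C)
    {j : Fin n} (hj : j ∈ Nin \ R) : v j ≤ C := by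
  obtain ⟨Rhi, Rlo, rfl, hhi, -⟩ := h
  rw [Finset.mem_sdiff, notMem_union] at hj
  exact hhi.le_of_notMem hxi hlocal hC hj.1 hj.2.1

theorem exists_mem_sdiff_of_card_lt (h : IsARCPRemoval Nin v xi F R) (hL : L ⊆ Nin)
    (hcard : F < L.card) (hxi : ∀ j ∈ L, v j ≤ xi) : ∃ k ∈ L, k ∈ Nin \ R := by
  obtain ⟨Rhi, Rlo, rfl, hhi, hlo⟩ := h
  obtain ⟨k, hkL, hk⟩ := exists_mem_notMem_of_card_lt_card (hlo.card_le.trans_lt hcard)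
  exact ⟨k, hkL, mem_sdiff.2 ⟨hL hkL, notMem_union.2
    ⟨fun hkhi => (hhi.lt_of_mem hkhi).not_ge (hxi k hkL), hk⟩⟩⟩

end IsARCPRemoval

theorem arcpUpdate_neg : arcpUpdate Nin R w (-v) (-xi) = -arcpUpdate Nin R w v xi := by
  rw [arcpUpdate, arcpUpdate, ← sum_neg_distrib]
  exact sum_congr rfl fun j _ => by rw [Pi.neg_apply]; ring

theorem arcpUpdate_le (hw : ∀ j ∈ Nin \ R, w j ∈ Set.Icc 0 β) (hβ : 0 ≤ β) (hxi : xi ≤ C)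
    (hv : ∀ j ∈ Nin \ R, v j ≤ C) : arcpUpdate Nin R w v xi ≤ n * β * (C - xi) := by
  have hgap : 0 ≤ C - xi := sub_nonneg.2 hxi
  calc arcpUpdate Nin R w v xi ≤ (Nin \ R).card • (β * (C - xi)) :=
        sum_le_card_nsmul _ _ _ fun j hj =>
          (mul_le_mul_of_nonneg_left (sub_le_sub_right (hv j hj) xi) (hw j hj).1).trans
            (mul_le_mul_of_nonneg_right (hw j hj).2 hgap)
    _ ≤ n * β * (C - xi) := by
        rw [nsmul_eq_mul, mul_assoc]
        gcongr
        exact card_finset_fin_le _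

theorem arcpUpdate_le_add (hα : 0 ≤ α) (hαβ : α ≤ β) (hw : ∀ j ∈ Nin \ R, w j ∈ Set.Icc α β)
    (hxi : xi ≤ C) (hv : ∀ j ∈ Nin \ R, v j ≤ C) {k : Fin n} (hk : k ∈ Nin \ R)
    (hkV : v k ≤ V) (hV : V ≤ xi) :
    arcpUpdate Nin R w v xi ≤ n * β * (C - xi) + α * (V - xi) := by
  have hsub : Nin \ insert k R ⊆ Nin \ R := sdiff_subset_sdiff subset_rfl (subset_insert k R)
  have hrest : arcpUpdate Nin (insert k R) w v xi ≤ n * β * (C - xi) :=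
    arcpUpdate_le (fun j hj => Set.Icc_subset_Icc_left hα (hw j (hsub hj))) (hα.trans hαβ) hxi
      fun j hj => hv j (hsub hj)
  have hpull : w k * (v k - xi) ≤ α * (V - xi) :=
    (mul_le_mul_of_nonpos_right (hw k hk).1 (by linarith)).trans
      (mul_le_mul_of_nonneg_left (sub_le_sub_right hkV xi) hα)
  rw [arcpUpdate, sdiff_insert] at hrest
  rw [arcpUpdate, ← sum_erase_add _ _ hk]
  exact add_le_add hrest hpull

end Removal

section Robustness

variable {n : ℕ} {f p : ℝ}

theorem two_mul_floor_lt_ceil (hf : 0 ≤ f) (hp : 2 * f < p) {d : ℕ} (hd : 0 < d) :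
    2 * ⌊f * d⌋₊ < ⌈p * d⌉₊ := by
  have hd' : (0 : ℝ) < d := Nat.cast_pos.2 hd
  rw [Nat.lt_ceil]
  push_cast
  calc 2 * (⌊f * d⌋₊ : ℝ) ≤ 2 * (f * d) := by gcongr; exact Nat.floor_le (by positivity)
    _ = 2 * f * d := by ring
    _ < p * d := mul_lt_mul_of_pos_right hp hd'

theorem FracEdgeReachable.exists_floor_lt_card {Nin : Fin n → Finset (Fin n)}
    {S Normal : Finset (Fin n)} (h : FracEdgeReachable Nin p S) (hf : 0 ≤ f) (hp : 2 * f < p)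
    (hlocal : ∀ i ∈ S, ((Nin i).filter fun j => j ∉ Normal).card ≤ ⌊f * (Nin i).card⌋₊) :
    ∃ i ∈ S, ⌊f * (Nin i).card⌋₊ < ((Nin i \ S).filter fun j => j ∈ Normal).card := by
  rcases h with ⟨i, hi, hd, hreach⟩ | ⟨rfl, -⟩
  · refine ⟨i, hi, ?_⟩
    have hsplit := card_filter_add_card_filter_not (s := Nin i \ S) fun j => j ∈ Normal
    have hadv : ((Nin i \ S).filter fun j => j ∉ Normal).card ≤
        ((Nin i).filter fun j => j ∉ Normal).card :=
      card_le_card (filter_subset_filter _ sdiff_subset)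
    have hfloor := two_mul_floor_lt_ceil hf hp hd
    have hloc := hlocal i hi
    omega
  · linarith

end Robustness

/-- The closed-loop velocity of agent `i` at time `s`: the ARC-P input computed from the conveyed
values, the weights and the removed sets at that time. -/
def velocity {n : ℕ} (Nin R : ℝ → Fin n → Finset (Fin n)) (w : ℝ → Fin n → Fin n → ℝ)
    (x : Fin n → ℝ → ℝ) (xc : Fin n → Fin n → ℝ → ℝ) (i : Fin n) (s : ℝ) : ℝ :=
  arcpUpdate (Nin s i) (R s i) (fun j => w s j i) (fun j => xc j i s) (x i s)

/-- The states `x` of the agents in `Normal` follow ARC-P with parameter `f` and weights in `[α, β]`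
under the `f`-fraction local Byzantine model: `xc j i` is the value conveyed by `j` to `i` and
`R t i` the set of in-neighbors that `i` removes at time `t`. Adversarial values are unconstrained,
except that the resulting velocities have to be integrable. -/
structure IsARCPSolution {n : ℕ} (Nin : ℝ → Fin n → Finset (Fin n)) (Normal : Finset (Fin n))
    (f α β : ℝ) (w : ℝ → Fin n → Fin n → ℝ) (R : ℝ → Fin n → Finset (Fin n))
    (x : Fin n → ℝ → ℝ) (xc : Fin n → Fin n → ℝ → ℝ) : Prop where
  lower_pos : 0 < α
  lower_le_upper : α ≤ β
  weight_mem : ∀ t, ∀ i ∈ Normal, ∀ j ∈ Nin t i, α ≤ w t j i ∧ w t j i ≤ β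
  card_adversary_le : ∀ t, ∀ i ∈ Normal,
    ((Nin t i).filter fun j => j ∉ Normal).card ≤ ⌊f * (Nin t i).card⌋₊
  conveyed_eq : ∀ j ∈ Normal, ∀ i, xc j i = x j
  isARCPRemoval : ∀ t, ∀ i ∈ Normal,
    IsARCPRemoval (Nin t i) (fun j => xc j i t) (x i t) ⌊f * (Nin t i).card⌋₊ (R t i)
  isCaratheodorySolution : ∀ i ∈ Normal, IsCaratheodorySolution (x i) (velocity Nin R w x xc i)

/-- The normal agents whose state exceeds `E` at time `a`; with `E = C - η` and `C` an upper bound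
of the normal states, these are the agents within `η` of the bound. -/
noncomputable def agentsAbove {n : ℕ} (Normal : Finset (Fin n)) (x : Fin n → ℝ → ℝ) (a E : ℝ) :
    Finset (Fin n) :=
  Normal.filter fun j => E < x j a

theorem agentsAbove_eq_empty_iff {n : ℕ} {Normal : Finset (Fin n)} {x : Fin n → ℝ → ℝ} {a E : ℝ} :
    agentsAbove Normal x a E = ∅ ↔ ∀ j ∈ Normal, x j a ≤ E := by
  simp [agentsAbove, filter_eq_empty_iff]

/-- The fraction of a gap `η` below an upper bound that is guaranteed after a window of length `τ`,
both to an agent that starts with gap `η`, and to one that is pulled during half of the window by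
agents that start with gap `η`. Its factors come from the decay of the gap of the pulling agents,
from the pull during time `τ / 2` and from the decay of the gap so gained. -/
noncomputable def contractionFactor (B α τ : ℝ) : ℝ :=
  Real.exp (-(B * τ)) * (α / (B + α) * (1 - Real.exp (-(B + α) * (τ / 2))) * Real.exp (-(B * τ)))

section ContractionFactor

variable {B α τ : ℝ}

theorem exp_pull_lt_one (hB : 0 ≤ B) (hα : 0 < α) (hτ : 0 < τ) :
    Real.exp (-(B + α) * (τ / 2)) < 1 := by
  rw [Real.exp_lt_one_iff, neg_mul, neg_lt_zero]
  positivity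

theorem contractionFactor_pos (hB : 0 ≤ B) (hα : 0 < α) (hτ : 0 < τ) :
    0 < contractionFactor B α τ := by
  have hpull := sub_pos.2 (exp_pull_lt_one hB hα hτ)
  unfold contractionFactor
  positivity

theorem contractionFactor_le_exp (hB : 0 ≤ B) (hα : 0 < α) (hτ : 0 < τ) :
    contractionFactor B α τ ≤ Real.exp (-(B * τ)) := by
  have hpull := exp_pull_lt_one hB hα hτ
  have hdecay : Real.exp (-(B * τ)) ≤ 1 := Real.exp_le_one_iff.2 (by nlinarith)
  refine mul_le_of_le_one_right (Real.exp_nonneg _)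
    (mul_le_one₀ (mul_le_one₀ ?_ (sub_nonneg.2 hpull.le) ?_) (Real.exp_nonneg _) hdecay)
  · rw [div_le_one (by positivity)]
    linarith
  · linarith [Real.exp_nonneg (-(B + α) * (τ / 2))]

theorem contractionFactor_le_one (hB : 0 ≤ B) (hα : 0 < α) (hτ : 0 < τ) :
    contractionFactor B α τ ≤ 1 :=
  (contractionFactor_le_exp hB hα hτ).trans (Real.exp_le_one_iff.2 (by nlinarith))

end ContractionFactor

namespace IsARCPSolution

variable {n : ℕ} {Nin R : ℝ → Fin n → Finset (Fin n)} {Normal L : Finset (Fin n)}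
  {f p α β : ℝ} {w : ℝ → Fin n → Fin n → ℝ} {x : Fin n → ℝ → ℝ} {xc : Fin n → Fin n → ℝ → ℝ}
  {a a' s t C C' V η τ : ℝ} {i : Fin n}

theorem neg (h : IsARCPSolution Nin Normal f α β w R x xc) :
    IsARCPSolution Nin Normal f α β w R (-x) (-xc) where
  lower_pos := h.lower_pos
  lower_le_upper := h.lower_le_upper
  weight_mem := h.weight_mem
  card_adversary_le := h.card_adversary_le
  conveyed_eq j hj i := congrArg Neg.neg (h.conveyed_eq j hj i)
  isARCPRemoval t i hi := (h.isARCPRemoval t i hi).neg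
  isCaratheodorySolution i hi := by
    have hvel : velocity Nin R w (-x) (-xc) i = -velocity Nin R w x xc i :=
      funext fun s => arcpUpdate_neg
    rw [hvel]
    exact (h.isCaratheodorySolution i hi).neg

theorem natCast_mul_upper_nonneg (h : IsARCPSolution Nin Normal f α β w R x xc) : 0 ≤ n * β :=
  mul_nonneg n.cast_nonneg (h.lower_pos.le.trans h.lower_le_upper)

theorem conveyed_le (h : IsARCPSolution Nin Normal f α β w R x xc) (hi : i ∈ Normal)
    (hC : ∀ j ∈ Normal, x j s ≤ C) : ∀ j ∈ Nin s i \ R s i, xc j i s ≤ C := fun _ hj =>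
  (h.isARCPRemoval s i hi).le_of_mem_sdiff (hC i hi) (h.card_adversary_le s i hi)
    (fun k hk => by simpa only [h.conveyed_eq k hk i] using hC k hk) hj

theorem weight_mem_Icc (h : IsARCPSolution Nin Normal f α β w R x xc) (hi : i ∈ Normal) :
    ∀ j ∈ Nin s i \ R s i, w s j i ∈ Set.Icc α β := fun j hj =>
  h.weight_mem s i hi j (mem_sdiff.1 hj).1

theorem velocity_le (h : IsARCPSolution Nin Normal f α β w R x xc) (hi : i ∈ Normal)
    (hC : ∀ j ∈ Normal, x j s ≤ C) : velocity Nin R w x xc i s ≤ n * β * (C - x i s) :=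
  arcpUpdate_le (fun j hj => Set.Icc_subset_Icc_left h.lower_pos.le (h.weight_mem_Icc hi j hj))
    (h.lower_pos.le.trans h.lower_le_upper) (hC i hi) (h.conveyed_le hi hC)

theorem velocity_le_add (h : IsARCPSolution Nin Normal f α β w R x xc) (hi : i ∈ Normal)
    (hC : ∀ j ∈ Normal, x j s ≤ C) (hL : L ⊆ Nin s i) (hLN : L ⊆ Normal)
    (hcard : ⌊f * (Nin s i).card⌋₊ < L.card) (hLV : ∀ j ∈ L, x j s ≤ V) :
    velocity Nin R w x xc i s ≤ n * β * (C - x i s) + α * (V - x i s) := by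
  rcases le_or_gt (x i s) V with hle | hlt
  · have hpull : 0 ≤ α * (V - x i s) := mul_nonneg h.lower_pos.le (sub_nonneg.2 hle)
    linarith [h.velocity_le hi hC]
  have hconv : ∀ j ∈ L, xc j i s ≤ V := fun j hj => by
    simpa only [h.conveyed_eq j (hLN hj) i] using hLV j hj
  obtain ⟨k, hkL, hk⟩ := (h.isARCPRemoval s i hi).exists_mem_sdiff_of_card_lt hL hcard
    fun j hj => (hconv j hj).trans hlt.le
  exact arcpUpdate_le_add h.lower_pos.le h.lower_le_upper (h.weight_mem_Icc hi) (hC i hi)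
    (h.conveyed_le hi hC) hk (hconv k hkL) hlt.le

theorem le_of_le (h : IsARCPSolution Nin Normal f α β w R x xc) (ha : 0 ≤ a)
    (hC : ∀ j ∈ Normal, x j a ≤ C) (hat : a ≤ t) : ∀ j ∈ Normal, x j t ≤ C := by
  by_contra! hex
  obtain ⟨j, hj, hCj⟩ := hex
  obtain ⟨E, hCE, hEj⟩ := exists_between hCj
  obtain ⟨T, hT, ⟨i, hi, hET⟩, hbefore⟩ := exists_first_time_le hat
    (fun i hi => (h.isCaratheodorySolution i hi).continuousOn ha) ⟨j, hj, hEj.le⟩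
  have hgronwall := (h.isCaratheodorySolution i hi).sub_le_mul_exp ha hT.1 fun s hs =>
    h.velocity_le hi fun k hk => (hbefore s hs k hk).le
  have hneg : (x i a - E) * Real.exp (-(n * β) * (T - a)) < 0 :=
    mul_neg_of_neg_of_pos (by linarith [hC i hi]) (Real.exp_pos _)
  linarith

theorem mem_Icc_of_mem_Icc (h : IsARCPSolution Nin Normal f α β w R x xc) (ha : 0 ≤ a)
    (hx : ∀ j ∈ Normal, x j a ∈ Set.Icc C' C) (hat : a ≤ t) :
    ∀ j ∈ Normal, x j t ∈ Set.Icc C' C := fun j hj =>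
  ⟨neg_le_neg_iff.1 (h.neg.le_of_le ha (fun k hk => neg_le_neg (hx k hk).1) hat j hj),
    h.le_of_le ha (fun k hk => (hx k hk).2) hat j hj⟩

theorem le_sub_exp_mul (h : IsARCPSolution Nin Normal f α β w R x xc) (ha : 0 ≤ a)
    (hC : ∀ j ∈ Normal, x j a ≤ C) (hat : a ≤ t) (htτ : t ≤ a + τ) (hi : i ∈ Normal) (hη : 0 ≤ η)
    (hxi : x i a ≤ C - η) : x i t ≤ C - Real.exp (-(n * β * τ)) * η :=
  (h.isCaratheodorySolution i hi).le_sub_exp_mul h.natCast_mul_upper_nonneg ha hat htτ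
    (fun _ hs => h.velocity_le hi (h.le_of_le ha hC hs.1)) hη hxi

theorem le_sub_contractionFactor_mul (h : IsARCPSolution Nin Normal f α β w R x xc) (hτ : 0 < τ)
    (ha : 0 ≤ a) (hC : ∀ j ∈ Normal, x j a ≤ C) (haa' : a ≤ a') (ha'τ : a' + τ / 2 ≤ a + τ)
    (hη : 0 ≤ η) (hconst : ∀ s ∈ Set.Ico a' (a' + τ / 2), Nin s = Nin a') (hi : i ∈ Normal)
    (hL : L ⊆ Nin a' i) (hLN : L ⊆ Normal) (hcard : ⌊f * (Nin a' i).card⌋₊ < L.card)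
    (hLx : ∀ j ∈ L, x j a ≤ C - η) :
    x i (a + τ) ≤ C - contractionFactor (n * β) α τ * η := by
  have hB := h.natCast_mul_upper_nonneg
  have hα := h.lower_pos
  have hpulled := (h.isCaratheodorySolution i hi).le_sub_mul_of_pull
    (V := C - Real.exp (-(n * β * τ)) * η) (add_pos_of_nonneg_of_pos hB hα) (ha.trans haa')
    (by linarith : a' ≤ a' + τ / 2) (h.le_of_le ha hC haa' i hi) fun s hs =>
      have has : a ≤ s := haa'.trans hs.1
      h.velocity_le_add hi (h.le_of_le ha hC has) (by rwa [hconst s hs]) hLN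
        (by rwa [hconst s hs]) fun j hj =>
          h.le_sub_exp_mul ha hC has (hs.2.le.trans ha'τ) (hLN hj) hη (hLx j hj)
  rw [sub_sub_cancel, add_sub_cancel_left, ← mul_assoc] at hpulled
  have hgap : 0 ≤ α / (n * β + α) * (1 - Real.exp (-(n * β + α) * (τ / 2))) *
      Real.exp (-(n * β * τ)) * η := by
    have := sub_pos.2 (exp_pull_lt_one hB hα hτ)
    positivity
  rw [contractionFactor, mul_assoc]
  exact h.le_sub_exp_mul (by linarith) (h.le_of_le ha hC (by linarith)) ha'τ (by linarith) hi
    hgap hpulled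

theorem agentsAbove_subset (h : IsARCPSolution Nin Normal f α β w R x xc) (hτ : 0 < τ)
    (ha : 0 ≤ a) (hC : ∀ j ∈ Normal, x j a ≤ C) (hη : 0 ≤ η) :
    agentsAbove Normal x (a + τ) (C - contractionFactor (n * β) α τ * η) ⊆
      agentsAbove Normal x a (C - η) := by
  intro j hj
  obtain ⟨hjN, hj⟩ := mem_filter.1 hj
  refine mem_filter.2 ⟨hjN, ?_⟩
  by_contra! hle
  have hdecay := h.le_sub_exp_mul ha hC (le_add_of_nonneg_right hτ.le) le_rfl hjN hη hle
  have hfactor := mul_le_mul_of_nonneg_right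
    (contractionFactor_le_exp h.natCast_mul_upper_nonneg h.lower_pos hτ) hη
  linarith

theorem card_agentsAbove_lt (h : IsARCPSolution Nin Normal f α β w R x xc) (hf : 0 ≤ f)
    (hp : 2 * f < p) (hτ : 0 < τ) (ha : 0 ≤ a) (hC : ∀ j ∈ Normal, x j a ≤ C) (haa' : a ≤ a')
    (ha'τ : a' + τ / 2 ≤ a + τ) (hη : 0 ≤ η)
    (hconst : ∀ s ∈ Set.Ico a' (a' + τ / 2), Nin s = Nin a')
    (hreach : FracEdgeReachable (Nin a') p (agentsAbove Normal x a (C - η))) :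
    (agentsAbove Normal x (a + τ) (C - contractionFactor (n * β) α τ * η)).card <
      (agentsAbove Normal x a (C - η)).card := by
  obtain ⟨i, hi, hcard⟩ := hreach.exists_floor_lt_card hf hp fun i hi =>
    h.card_adversary_le a' i (mem_filter.1 hi).1
  have hleave := h.le_sub_contractionFactor_mul hτ ha hC haa' ha'τ hη hconst (mem_filter.1 hi).1
    ((filter_subset _ _).trans sdiff_subset) (fun j hj => (mem_filter.1 hj).2) hcard fun j hj => by
      obtain ⟨hj, hjN⟩ := mem_filter.1 hj
      by_contra! hlt
      exact (mem_sdiff.1 hj).2 (mem_filter.2 ⟨hjN, hlt⟩)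
  exact card_lt_card <| (ssubset_iff_of_subset (h.agentsAbove_subset hτ ha hC hη)).2
    ⟨i, hi, fun hi' => hleave.not_gt (mem_filter.1 hi').2⟩

theorem card_agentsAbove_add_card_lt (h : IsARCPSolution Nin Normal f α β w R x xc)
    (hf : 0 ≤ f) (hp : 2 * f < p) (hτ : 0 < τ) (ha : 0 ≤ a)
    (hx : ∀ j ∈ Normal, x j a ∈ Set.Icc C' C) (haa' : a ≤ a') (ha'τ : a' + τ / 2 ≤ a + τ)
    (hη : 0 ≤ η) (hηC : C' + η ≤ C - η)
    (hconst : ∀ s ∈ Set.Ico a' (a' + τ / 2), Nin s = Nin a') (hrobust : FracRobust (Nin a') p)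
    (hhigh : (agentsAbove Normal x a (C - η)).Nonempty)
    (hlow : (agentsAbove Normal (-x) a (-C' - η)).Nonempty) :
    (agentsAbove Normal x (a + τ) (C - contractionFactor (n * β) α τ * η)).card +
        (agentsAbove Normal (-x) (a + τ) (-C' - contractionFactor (n * β) α τ * η)).card <
      (agentsAbove Normal x a (C - η)).card + (agentsAbove Normal (-x) a (-C' - η)).card := by
  have hC : ∀ j ∈ Normal, x j a ≤ C := fun j hj => (hx j hj).2
  have hC' : ∀ j ∈ Normal, (-x) j a ≤ -C' := fun j hj => neg_le_neg (hx j hj).1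
  have hdisj : Disjoint (agentsAbove Normal x a (C - η)) (agentsAbove Normal (-x) a (-C' - η)) :=
    disjoint_filter.2 fun j _ hj hj' => by
      rw [Pi.neg_apply, Pi.neg_apply] at hj'
      linarith
  rcases hrobust _ _ hhigh hlow hdisj with hreach | hreach
  · exact add_lt_add_of_lt_of_le
      (h.card_agentsAbove_lt hf hp hτ ha hC haa' ha'τ hη hconst hreach)
      (card_le_card (h.neg.agentsAbove_subset hτ ha hC' hη))
  · exact add_lt_add_of_le_of_lt (card_le_card (h.agentsAbove_subset hτ ha hC hη))
      (h.neg.card_agentsAbove_lt hf hp hτ ha hC' haa' ha'τ hη hconst hreach)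

theorem agentsAbove_eq_empty_or_card_add_le (h : IsARCPSolution Nin Normal f α β w R x xc)
    (hf : 0 ≤ f) (hp : 2 * f < p) (hτ : 0 < τ) (ha : 0 ≤ a)
    (hwindow : ∀ b, a ≤ b → ∃ b', b ≤ b' ∧ b' + τ / 2 ≤ b + τ ∧
      ∀ s ∈ Set.Ico b' (b' + τ / 2), Nin s = Nin b')
    (hrobust : ∀ t, a ≤ t → FracRobust (Nin t) p) (hη : 0 ≤ η) (hηC : C' + η ≤ C - η)
    (hx : ∀ j ∈ Normal, x j a ∈ Set.Icc C' C) (m : ℕ) :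
    agentsAbove Normal x (a + m * τ) (C - contractionFactor (n * β) α τ ^ m * η) = ∅ ∨
      agentsAbove Normal (-x) (a + m * τ) (-C' - contractionFactor (n * β) α τ ^ m * η) = ∅ ∨
      (agentsAbove Normal x (a + m * τ) (C - contractionFactor (n * β) α τ ^ m * η)).card +
        (agentsAbove Normal (-x) (a + m * τ)
          (-C' - contractionFactor (n * β) α τ ^ m * η)).card + m ≤ 2 * Normal.card := by
  induction m with
  | zero =>
    exact .inr (.inr (by
      rw [add_zero, two_mul]
      exact add_le_add (card_filter_le _ _) (card_filter_le _ _)))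
  | succ m ih =>
    have hq₀ := contractionFactor_pos h.natCast_mul_upper_nonneg h.lower_pos hτ
    have hq₁ := contractionFactor_le_one h.natCast_mul_upper_nonneg h.lower_pos hτ
    have hgap : contractionFactor (n * β) α τ ^ m * η ≤ η :=
      mul_le_of_le_one_left hη (pow_le_one₀ hq₀.le hq₁)
    have hlater : a ≤ a + m * τ := le_add_of_nonneg_right (by positivity)
    have hxm := h.mem_Icc_of_mem_Icc ha hx hlater
    rw [pow_succ', mul_assoc, Nat.cast_succ, add_one_mul, ← add_assoc a]
    generalize a + m * τ = b at *
    have hη' : 0 ≤ contractionFactor (n * β) α τ ^ m * η := by positivity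
    generalize contractionFactor (n * β) α τ ^ m * η = η' at *
    have hb : 0 ≤ b := ha.trans hlater
    have hhigh := h.agentsAbove_subset hτ hb (fun j hj => (hxm j hj).2) hη'
    have hlow := h.neg.agentsAbove_subset hτ hb (fun j hj => neg_le_neg (hxm j hj).1) hη'
    rcases (agentsAbove Normal x b (C - η')).eq_empty_or_nonempty with hnone | hhighNe
    · exact .inl (subset_empty.1 (hnone ▸ hhigh))
    rcases (agentsAbove Normal (-x) b (-C' - η')).eq_empty_or_nonempty with hnone | hlowNe
    · exact .inr (.inl (subset_empty.1 (hnone ▸ hlow)))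
    obtain ⟨b', hbb', hb'τ, hconst⟩ := hwindow b hlater
    have hdrop := h.card_agentsAbove_add_card_lt hf hp hτ hb hxm hbb' hb'τ hη' (by linarith) hconst
      (hrobust b' (hlater.trans hbb')) hhighNe hlowNe
    have hcard := (ih.resolve_left hhighNe.ne_empty).resolve_left hlowNe.ne_empty
    exact .inr (.inr (by omega))

theorem exists_contraction (h : IsARCPSolution Nin Normal f α β w R x xc)
    (hNe : Normal.Nonempty) (hf : 0 ≤ f) (hp : 2 * f < p) (hτ : 0 < τ) (ha : 0 ≤ a)
    (hwindow : ∀ b, a ≤ b → ∃ b', b ≤ b' ∧ b' + τ / 2 ≤ b + τ ∧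
      ∀ s ∈ Set.Ico b' (b' + τ / 2), Nin s = Nin b')
    (hrobust : ∀ t, a ≤ t → FracRobust (Nin t) p) (hx : ∀ j ∈ Normal, x j a ∈ Set.Icc C' C) :
    ∃ b D' D, a ≤ b ∧ (∀ j ∈ Normal, x j b ∈ Set.Icc D' D) ∧
      D - D' ≤ (1 - contractionFactor (n * β) α τ ^ (2 * Normal.card) / 2) * (C - C') := by
  set m := 2 * Normal.card
  have hCC : C' ≤ C := hNe.elim fun j hj => (hx j hj).1.trans (hx j hj).2
  have hlater : a ≤ a + m * τ := le_add_of_nonneg_right (by positivity)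
  have hxm := h.mem_Icc_of_mem_Icc ha hx hlater
  have hshrunk := h.agentsAbove_eq_empty_or_card_add_le hf hp hτ ha hwindow hrobust
    (η := (C - C') / 2) (by linarith) (by linarith) hx m
  have hempty : agentsAbove Normal x (a + m * τ)
        (C - contractionFactor (n * β) α τ ^ m * ((C - C') / 2)) = ∅ ∨
      agentsAbove Normal (-x) (a + m * τ)
        (-C' - contractionFactor (n * β) α τ ^ m * ((C - C') / 2)) = ∅ :=
    hshrunk.imp_right fun hlow => hlow.elim id fun hcard => card_eq_zero.1 (by omega)
  rcases hempty with hnone | hnone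
  · exact ⟨_, _, _, hlater, fun j hj => ⟨(hxm j hj).1, agentsAbove_eq_empty_iff.1 hnone j hj⟩,
      by linarith⟩
  · exact ⟨_, _, _, hlater, fun j hj =>
      ⟨neg_le_neg_iff.1 ((agentsAbove_eq_empty_iff.1 hnone j hj).trans_eq (neg_add' _ _).symm),
        (hxm j hj).2⟩, by linarith⟩

end IsARCPSolution

end ARCP

theorem stmt7_general {n : ℕ} {Nin R : ℝ → Fin n → Finset (Fin n)} {Normal : Finset (Fin n)}
    {f p α β τ : ℝ} {w : ℝ → Fin n → Fin n → ℝ} {x : Fin n → ℝ → ℝ} {xc : Fin n → Fin n → ℝ → ℝ}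
    {tseq : ℕ → ℝ} (h : ARCP.IsARCPSolution Nin Normal f α β w R x xc) (hNe : Normal.Nonempty)
    (hτ : 0 < τ) (htseq0 : tseq 0 = 0) (hdwell : ∀ k, τ ≤ tseq (k + 1) - tseq k)
    (hswitch : ∀ k, ∀ t ∈ Set.Ico (tseq k) (tseq (k + 1)), Nin t = Nin (tseq k))
    (hf : 0 ≤ f) (hp : 2 * f < p)
    (hrobust : ∃ t', 0 ≤ t' ∧ ∀ t, t' ≤ t → ARCP.FracRobust (Nin t) p) :
    (∃ L, ∀ i ∈ Normal, Tendsto (x i) atTop (𝓝 L)) ∧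
      ∀ i ∈ Normal, ∀ t, 0 ≤ t → x i t ∈ Set.Icc
        (Normal.inf' hNe fun j => x j 0) (Normal.sup' hNe fun j => x j 0) := by
  obtain ⟨t', ht', hrobust⟩ := hrobust
  have hbound : ∀ t, 0 ≤ t → ∀ i ∈ Normal, x i t ∈ Set.Icc
      (Normal.inf' hNe fun j => x j 0) (Normal.sup' hNe fun j => x j 0) := fun t ht =>
    h.mem_Icc_of_mem_Icc le_rfl (fun j hj => ⟨inf'_le _ hj, le_sup' (fun j => x j 0) hj⟩) ht
  refine ⟨?_, fun i hi t ht => hbound t ht i hi⟩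
  have hq₀ := ARCP.contractionFactor_pos h.natCast_mul_upper_nonneg h.lower_pos hτ
  have hq₁ := ARCP.contractionFactor_le_one h.natCast_mul_upper_nonneg h.lower_pos hτ
  have hpow₀ := pow_pos hq₀ (2 * Normal.card)
  have hpow₁ := pow_le_one₀ (n := 2 * Normal.card) hq₀.le hq₁
  refine ARCP.exists_forall_tendsto_of_interval_contraction (N := (Normal : Set (Fin n)))
    (ρ := 1 - ARCP.contractionFactor (n * β) α τ ^ (2 * Normal.card) / 2) (coe_nonempty.2 hNe)
    (by linarith) (by linarith) ⟨_, _, hbound t' ht'⟩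
    (fun a C' C ha hx t hat => h.mem_Icc_of_mem_Icc (ht'.trans ha) hx hat)
    fun a C' C ha hx => h.exists_contraction hNe hf hp hτ (ht'.trans ha) (fun b hab => ?_)
      (fun t hat => hrobust t (ha.trans hat)) hx
  exact ARCP.exists_half_window_const hτ hdwell hswitch (htseq0.le.trans (by linarith))

/-- Theorem 3 of the paper, sufficiency for time-varying networks:
under the `f`-fraction local Byzantine model, with a piecewise constant switching
topology whose switching times satisfy the dwell-time condition `t_{k+1} - t_k ≥ τ > 0`,
if every normal node runs ARC-P with parameter `f ∈ [0,1/2)` and there is `t' ≥ 0` such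
that the digraph `D(t)` is `p`-fraction robust for all `t ≥ t'`, with `2f < p ≤ 1`,
then CTRAC is achieved. -/
theorem stmt7 {n : ℕ}
    (Nin : ℝ → Fin n → Finset (Fin n))     -- time-varying in-neighborhoods
    -- switching times with dwell time τ; the topology is constant between switches
    (τ : ℝ) (hτ : 0 < τ)
    (tseq : ℕ → ℝ) (htseq0 : tseq 0 = 0)
    (hdwell : ∀ k : ℕ, τ ≤ tseq (k + 1) - tseq k)
    (hswitch : ∀ k : ℕ, ∀ t ∈ Set.Ico (tseq k) (tseq (k + 1)), Nin t = Nin (tseq k))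
    (Normal : Finset (Fin n)) (hNe : Normal.Nonempty)
    (f p : ℝ) (hf0 : 0 ≤ f) (hf : f < 1 / 2) (hp : 2 * f < p) (hp1 : p ≤ 1)
    -- the network is eventually p-fraction robust
    (hrobust : ∃ t' : ℝ, 0 ≤ t' ∧ ∀ t : ℝ, t' ≤ t → ARCP.FracRobust (Nin t) p)
    -- the adversary set (the non-normal agents) is an f-fraction local set
    (hlocal : ∀ t : ℝ, ∀ i ∈ Normal,
      ((Nin t i).filter fun j => j ∉ Normal).card ≤ ⌊f * (((Nin t i).card : ℝ))⌋₊)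
    (α β : ℝ) (hα : 0 < α) (hαβ : α ≤ β)
    (w : ℝ → Fin n → Fin n → ℝ)
    (hw : ∀ t : ℝ, ∀ i ∈ Normal, ∀ j ∈ Nin t i, α ≤ w t j i ∧ w t j i ≤ β)
    (x : Fin n → ℝ → ℝ)                    -- agents' states
    (xc : Fin n → Fin n → ℝ → ℝ)           -- value conveyed by j intended for i
    (hxc : ∀ j ∈ Normal, ∀ i, xc j i = x j)  -- normal agents convey their own state
    (hbyz : ∀ j i, Continuous (xc j i))    -- Byzantine trajectories are continuous
    (R : ℝ → Fin n → Finset (Fin n))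
    -- R t i is a valid ARC-P removal with parameter f, i.e. F_i(t) = ⌊f ⬝ d_i(t)⌋
    (hR : ∀ t : ℝ, ∀ i ∈ Normal,
      ARCP.IsARCPRemoval (Nin t i) (fun j => xc j i t) (x i t)
        (⌊f * (((Nin t i).card : ℝ))⌋₊) (R t i))
    -- Carathéodory solution (integral form) for each normal agent
    (hint : ∀ i ∈ Normal, ∀ t : ℝ, 0 ≤ t → IntervalIntegrable
      (fun s => ARCP.arcpUpdate (Nin s i) (R s i) (fun j => w s j i)
        (fun j => xc j i s) (x i s)) volume 0 t)
    (hsol : ∀ i ∈ Normal, ∀ t : ℝ, 0 ≤ t → x i t = x i 0 + ∫ s in (0 : ℝ)..t,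
      ARCP.arcpUpdate (Nin s i) (R s i) (fun j => w s j i) (fun j => xc j i s) (x i s)) :
    (∃ L : ℝ, ∀ i ∈ Normal, Tendsto (x i) atTop (𝓝 L)) ∧
    (∀ i ∈ Normal, ∀ t : ℝ, 0 ≤ t → x i t ∈ Set.Icc
      (Normal.inf' hNe fun j => x j 0) (Normal.sup' hNe fun j => x j 0)) :=
  stmt7_general ⟨hα, hαβ, hw, hlocal, hxc, hR, fun i hi => ⟨hint i hi, hsol i hi⟩⟩ hNe hτ htseq0
    hdwell hswitch hf0 hp hrobust
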